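/- For all integers j, k with 1 ≤ j ≤ k and every μ ∈ ℂ, the congruence orbit of the skew-symmetric pencil H_j(μ) ⊕ H_k(μ) is contained in the closure of the congruence orbit of the skew-symmetric pencil H_{j−1}(μ) ⊕ H_{k+1}(μ) (both pencils have size (2j+2k) × (2j+2k); H_0(μ) is the empty 0×0 pencil). -/

import Mathlib

/-!
Basic framework: a complex `m × n` matrix pencil `A - λ B` is formalized as the
pair `(A, B)` of matrices.  We define strict equivalence, congruence,
skew-symmetry, orbits, direct sums, and the cover relations for the orbit
closure hierarchies (in the Euclidean topology).
-/

open Matrix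

noncomputable section

/-- An `m × n` complex matrix pencil `A - λ B`, formalized as the pair `(A, B)`. -/
abbrev Pencil (m n : ℕ) : Type :=
  Matrix (Fin m) (Fin n) ℂ × Matrix (Fin m) (Fin n) ℂ

namespace Pencil

/-- Strict equivalence of matrix pencils: `Q⁻¹ * A * R = C` and `Q⁻¹ * B * R = D`
for some invertible `Q`, `R`. -/
def StrictEquiv {m n : ℕ} (P Q : Pencil m n) : Prop :=
  ∃ (S : Matrix (Fin m) (Fin m) ℂ) (R : Matrix (Fin n) (Fin n) ℂ),
    IsUnit S ∧ IsUnit R ∧ S⁻¹ * P.1 * R = Q.1 ∧ S⁻¹ * P.2 * R = Q.2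

/-- The strict-equivalence orbit of a pencil. -/
def orbE {m n : ℕ} (P : Pencil m n) : Set (Pencil m n) :=
  {Q | StrictEquiv P Q}

/-- A pencil `A - λ B` is skew-symmetric if `Aᵀ = -A` and `Bᵀ = -B`. -/
def IsSkew {n : ℕ} (P : Pencil n n) : Prop :=
  P.1ᵀ = -P.1 ∧ P.2ᵀ = -P.2

/-- Congruence of (square) matrix pencils: `Sᵀ * A * S = C` and `Sᵀ * B * S = D`
for some invertible `S`. -/
def Congruent {n : ℕ} (P Q : Pencil n n) : Prop :=
  ∃ S : Matrix (Fin n) (Fin n) ℂ,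
    IsUnit S ∧ Sᵀ * P.1 * S = Q.1 ∧ Sᵀ * P.2 * S = Q.2

/-- The congruence orbit of a pencil. -/
def orbC {n : ℕ} (P : Pencil n n) : Set (Pencil n n) :=
  {Q | Congruent P Q}

/-- Direct (block-diagonal) sum of two pencils. -/
def dsum {m n p q : ℕ} (P : Pencil m n) (Q : Pencil p q) : Pencil (m + p) (n + q) :=
  ((fromBlocks P.1 0 0 Q.1).submatrix finSumFinEquiv.symm finSumFinEquiv.symm,
   (fromBlocks P.2 0 0 Q.2).submatrix finSumFinEquiv.symm finSumFinEquiv.symm)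

/-- Transport a pencil along equalities of its dimensions. -/
def cast {m n m' n' : ℕ} (hm : m = m') (hn : n = n') (P : Pencil m n) : Pencil m' n' :=
  (P.1.submatrix (finCongr hm.symm) (finCongr hn.symm),
   P.2.submatrix (finCongr hm.symm) (finCongr hn.symm))

/-- `orbE P1` covers `orbE P2` in the closure hierarchy of strict-equivalence
orbits: `P1` is not strictly equivalent to `P2`, `orbE P2 ⊆ closure (orbE P1)`,
and there is no intermediate orbit strictly between them. -/
def CoversE {m n : ℕ} (P1 P2 : Pencil m n) : Prop :=
  ¬ StrictEquiv P1 P2 ∧ orbE P2 ⊆ closure (orbE P1) ∧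
    ¬ ∃ P : Pencil m n, ¬ StrictEquiv P P1 ∧ ¬ StrictEquiv P P2 ∧
        orbE P ⊆ closure (orbE P1) ∧ orbE P2 ⊆ closure (orbE P)

/-- `orbC P1` covers `orbC P2` in the closure hierarchy of congruence orbits of
skew-symmetric pencils: `P1` is not congruent to `P2`,
`orbC P2 ⊆ closure (orbC P1)`, and there is no congruence orbit of a
skew-symmetric pencil strictly between them. -/
def CoversC {n : ℕ} (P1 P2 : Pencil n n) : Prop :=
  ¬ Congruent P1 P2 ∧ orbC P2 ⊆ closure (orbC P1) ∧
    ¬ ∃ P : Pencil n n, IsSkew P ∧ ¬ Congruent P P1 ∧ ¬ Congruent P P2 ∧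
        orbC P ⊆ closure (orbC P1) ∧ orbC P2 ⊆ closure (orbC P)

end Pencil

/-! Canonical building blocks. -/

/-- The `k × k` Jordan block `J_k(μ)`. -/
def Jmat (k : ℕ) (μ : ℂ) : Matrix (Fin k) (Fin k) ℂ :=
  Matrix.of fun i j => if (j : ℕ) = (i : ℕ) then μ else if (j : ℕ) = (i : ℕ) + 1 then 1 else 0

/-- The `k × (k+1)` matrix `F_k` with ones on the superdiagonal. -/
def Fmat (k : ℕ) : Matrix (Fin k) (Fin (k + 1)) ℂ :=
  Matrix.of fun i j => if (j : ℕ) = (i : ℕ) + 1 then 1 else 0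

/-- The `k × (k+1)` matrix `G_k` with ones on the diagonal. -/
def Gmat (k : ℕ) : Matrix (Fin k) (Fin (k + 1)) ℂ :=
  Matrix.of fun i j => if (j : ℕ) = (i : ℕ) then 1 else 0

/-- The Kronecker block `E_k(μ) = J_k(μ) - λ I_k`. -/
def Eblk (k : ℕ) (μ : ℂ) : Pencil k k := (Jmat k μ, 1)

/-- The Kronecker block `E_k(∞) = I_k - λ J_k(0)`. -/
def EInfblk (k : ℕ) : Pencil k k := (1, Jmat k 0)

/-- The Kronecker block `L_k = F_k - λ G_k`. -/
def Lblk (k : ℕ) : Pencil k (k + 1) := (Fmat k, Gmat k)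

/-- The Kronecker block `L_kᵀ = F_kᵀ - λ G_kᵀ`. -/
def LTblk (k : ℕ) : Pencil (k + 1) k := ((Fmat k)ᵀ, (Gmat k)ᵀ)

/-- The skew-symmetric matrix `[[0, X], [-Xᵀ, 0]]`. -/
def skewPair {p q : ℕ} (X : Matrix (Fin p) (Fin q) ℂ) :
    Matrix (Fin (p + q)) (Fin (p + q)) ℂ :=
  (fromBlocks 0 X (-Xᵀ) 0).submatrix finSumFinEquiv.symm finSumFinEquiv.symm

/-- The skew-symmetric canonical block `H_h(μ)` (size `2h × 2h`). -/
def Hblk (h : ℕ) (μ : ℂ) : Pencil (h + h) (h + h) :=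
  (skewPair (Jmat h μ), skewPair (1 : Matrix (Fin h) (Fin h) ℂ))

/-- The skew-symmetric canonical block `K_k = H_k(∞)` (size `2k × 2k`). -/
def Kblk (k : ℕ) : Pencil (k + k) (k + k) :=
  (skewPair (1 : Matrix (Fin k) (Fin k) ℂ), skewPair (Jmat k 0))

/-- The skew-symmetric canonical block `M_m` (size `(2m+1) × (2m+1)`). -/
def Mblk (m : ℕ) : Pencil (m + (m + 1)) (m + (m + 1)) :=
  (skewPair (Fmat m), skewPair (Gmat m))

open Filter Topology

theorem Pencil.Congruent.trans {n : ℕ} {P Q R : Pencil n n} (h₁ : Pencil.Congruent P Q)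
    (h₂ : Pencil.Congruent Q R) : Pencil.Congruent P R := by
  obtain ⟨S, hS, hA, hB⟩ := h₁
  obtain ⟨T, hT, hC, hD⟩ := h₂
  exact ⟨S * T, hS.mul hT, by rw [← hC, ← hA]; simp only [transpose_mul, Matrix.mul_assoc],
    by rw [← hD, ← hB]; simp only [transpose_mul, Matrix.mul_assoc]⟩

/-- The closure of a congruence orbit is stable under congruence. -/
theorem Pencil.orbC_subset_closure_of_mem {n : ℕ} {P Q : Pencil n n}
    (h : P ∈ closure (Pencil.orbC Q)) : Pencil.orbC P ⊆ closure (Pencil.orbC Q) := by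
  rintro R ⟨S, hS, hA, hB⟩
  have hR : R = (fun T : Pencil n n => ((Sᵀ * T.1 * S, Sᵀ * T.2 * S) : Pencil n n)) P :=
    Prod.ext hA.symm hB.symm
  rw [hR]
  refine map_mem_closure (t := Pencil.orbC Q)
    (f := fun T : Pencil n n => ((Sᵀ * T.1 * S, Sᵀ * T.2 * S) : Pencil n n)) (by fun_prop) h
    fun T hT => ?_
  exact Pencil.Congruent.trans hT ⟨S, hS, rfl, rfl⟩

/-- The skew-symmetric matrix `[[0, X], [-Xᵀ, 0]]`, with indices relabelled along `e`. -/
def skewBlocks {n : ℕ} {ι : Type} (e : Fin n ≃ ι ⊕ ι) (X : Matrix ι ι ℂ) :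
    Matrix (Fin n) (Fin n) ℂ :=
  (fromBlocks 0 X (-Xᵀ) 0).submatrix e e

theorem transpose_mul_skewBlocks_mul {n : ℕ} {ι κ : Type} [Fintype ι] [Fintype κ]
    (e : Fin n ≃ ι ⊕ ι) (e' : Fin n ≃ κ ⊕ κ) (X : Matrix κ κ ℂ)
    (P : Matrix ι κ ℂ) (Q : Matrix κ ι ℂ) :
    ((fromBlocks Pᵀ 0 0 Q).submatrix e' e)ᵀ * skewBlocks e' X *
      (fromBlocks Pᵀ 0 0 Q).submatrix e' e = skewBlocks e (P * X * Q) := by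
  simp only [skewBlocks, transpose_submatrix, submatrix_mul_equiv, fromBlocks_transpose,
    fromBlocks_multiply]
  simp [Matrix.mul_assoc]

/-- Similar matrices give congruent skew-symmetric pencils. -/
theorem congruent_skewBlocks {n : ℕ} {ι κ : Type} [Fintype ι] [Fintype κ] [DecidableEq ι]
    [DecidableEq κ] (e : Fin n ≃ ι ⊕ ι) (e' : Fin n ≃ κ ⊕ κ) {X : Matrix κ κ ℂ}
    {M : Matrix ι ι ℂ} {P : Matrix ι κ ℂ} {Q : Matrix κ ι ℂ} (hPQ : P * Q = 1)
    (hX : P * X = M * P) :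
    Pencil.Congruent ((skewBlocks e' X, skewBlocks e' 1) : Pencil n n)
      (skewBlocks e M, skewBlocks e 1) := by
  refine ⟨(fromBlocks Pᵀ 0 0 Q).submatrix e' e, ?_, ?_, ?_⟩
  · refine IsUnit.of_mul_eq_one_right ((fromBlocks Qᵀ 0 0 P).submatrix e e') ?_
    rw [submatrix_mul_equiv, fromBlocks_multiply]
    simp [hPQ, ← transpose_mul]
  · rw [transpose_mul_skewBlocks_mul, hX, Matrix.mul_assoc, hPQ, Matrix.mul_one]
  · rw [transpose_mul_skewBlocks_mul, Matrix.mul_one, hPQ]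

/-- The relabelling of indices that puts `H_j(μ) ⊕ H_k(μ)` in the form `[[0, X], [-Xᵀ, 0]]`. -/
def dsumSkewEquiv {j k n : ℕ} (h : n = j + j + (k + k)) :
    Fin n ≃ (Fin j ⊕ Fin k) ⊕ (Fin j ⊕ Fin k) :=
  (finCongr h).trans <| finSumFinEquiv.symm.trans <|
    (Equiv.sumCongr finSumFinEquiv.symm finSumFinEquiv.symm).trans (Equiv.sumSumSumComm _ _ _ _)

theorem cast_dsum_Hblk {j k n : ℕ} (h : n = j + j + (k + k)) (μ : ℂ) :
    Pencil.cast h.symm h.symm (Pencil.dsum (Hblk j μ) (Hblk k μ)) =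
      (skewBlocks (dsumSkewEquiv h) (fromBlocks (Jmat j μ) 0 0 (Jmat k μ)),
        skewBlocks (dsumSkewEquiv h) 1) := by
  subst h
  refine Prod.ext ?_ ?_ <;>
  · ext a b
    obtain ⟨a, rfl⟩ := finSumFinEquiv.surjective a
    obtain ⟨b, rfl⟩ := finSumFinEquiv.surjective b
    rcases a with a | a <;> rcases b with b | b <;>
    · obtain ⟨a, rfl⟩ := finSumFinEquiv.surjective a
      obtain ⟨b, rfl⟩ := finSumFinEquiv.surjective b
      rcases a with a | a <;> rcases b with b | b <;>
        simp [Pencil.cast, Pencil.dsum, Hblk, skewPair, skewBlocks, dsumSkewEquiv, one_apply,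
          -finSumFinEquiv_apply_left, -finSumFinEquiv_apply_right]

theorem sum_ite_val_eq {n : ℕ} (v : ℕ) (g : ℕ → ℂ) :
    ∑ c : Fin n, (if (c : ℕ) = v then g c else 0) = if v < n then g v else 0 := by
  rw [Fin.sum_univ_eq_sum_range (fun c => if c = v then g c else 0) n]
  simp [Finset.sum_ite_eq']

theorem Jmat_mul_apply_of_val {n : ℕ} (μ : ℂ) (a : Fin n) (g : ℕ → ℂ) :
    ∑ c, Jmat n μ a c * g c = μ * g a + if (a : ℕ) + 1 < n then g (a + 1) else 0 := by
  have h : ∀ c : Fin n, Jmat n μ a c * g c = (if (c : ℕ) = a then μ * g c else 0) +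
      if (c : ℕ) = a + 1 then g c else 0 := by
    intro c
    simp only [Jmat, of_apply]
    split_ifs <;> first | omega | contradiction | simp
  simp only [h, Finset.sum_add_distrib]
  rw [sum_ite_val_eq a (fun c => μ * g c), sum_ite_val_eq (a + 1) g, if_pos a.isLt]

theorem mul_Jmat_apply_of_val {n : ℕ} (μ : ℂ) (b : Fin n) (g : ℕ → ℂ) :
    ∑ c : Fin n, g c * Jmat n μ c b = g b * μ + if (b : ℕ) = 0 then 0 else g (b - 1) := by
  have h : ∀ c : Fin n, g c * Jmat n μ c b = (if (c : ℕ) = b then g c * μ else 0) +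
      if (c : ℕ) = b - 1 then (if (b : ℕ) = 0 then 0 else g c) else 0 := by
    intro c
    simp only [Jmat, of_apply]
    split_ifs <;> first | omega | contradiction | simp
  simp only [h, Finset.sum_add_distrib]
  rw [sum_ite_val_eq b (fun c => g c * μ),
    sum_ite_val_eq (b - 1) (fun c => if (b : ℕ) = 0 then 0 else g c)]
  have := b.isLt
  split_ifs <;> first | omega | rfl

/-- The perturbation `J_j(μ) ⊕ J_k(μ) + ε E`, where `E` sends the eigenvector of the second
summand to the eigenvector of the first. -/
def jordanPerturb (j k : ℕ) (μ ε : ℂ) : Matrix (Fin j ⊕ Fin k) (Fin j ⊕ Fin k) ℂ :=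
  fromBlocks (Jmat j μ)
    (of fun a b => if (a : ℕ) = 0 then (if (b : ℕ) = 0 then ε else 0) else 0) 0 (Jmat k μ)

/-- The columns of this matrix are Jordan chains of lengths `m` and `k + 1` for
`jordanPerturb (m + 1) k μ ε`. -/
def jordanChains (m k : ℕ) (ε : ℂ) : Matrix (Fin (m + 1) ⊕ Fin k) (Fin m ⊕ Fin (k + 1)) ℂ :=
  fromBlocks (of fun a b => if (a : ℕ) = b + 1 then 1 else 0)
    (of fun a b => if (a : ℕ) = 0 then (if (b : ℕ) = 0 then ε else 0) else 0)
    (of fun a b => if (a : ℕ) = b then -ε⁻¹ else 0)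
    (of fun a b => if (b : ℕ) = a + 1 then 1 else 0)

/-- The inverse of `jordanChains m k ε`. -/
def jordanChainsInv (m k : ℕ) (ε : ℂ) : Matrix (Fin m ⊕ Fin (k + 1)) (Fin (m + 1) ⊕ Fin k) ℂ :=
  fromBlocks (of fun b a => if (b : ℕ) = a - 1 then (if (a : ℕ) = 0 then 0 else 1) else 0) 0
    (of fun b a => if (b : ℕ) = a then ε⁻¹ else 0)
    (of fun b a => if (b : ℕ) = a + 1 then 1 else 0)

theorem jordanChains_mul_inv {m k : ℕ} (hmk : m ≤ k) {ε : ℂ} (hε : ε ≠ 0) :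
    jordanChains m k ε * jordanChainsInv m k ε = 1 := by
  rw [jordanChains, jordanChainsInv, fromBlocks_multiply, ← fromBlocks_one]
  congr 1 <;> ext a b <;> have ha := a.isLt <;> have hb := b.isLt <;>
    simp only [Matrix.add_apply, mul_apply, of_apply, Matrix.zero_apply, mul_zero, mul_ite,
      Finset.sum_const_zero, zero_add, one_apply, Fin.ext_iff]
  · rw [sum_ite_val_eq (b - 1)
        (fun c => if (b : ℕ) = 0 then 0 else (if (a : ℕ) = c + 1 then (1 : ℂ) else 0) * 1),
      sum_ite_val_eq b (fun c => (if (a : ℕ) = 0 then if c = 0 then ε else 0 else 0) * ε⁻¹)]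
    split_ifs <;> first | omega | contradiction | simp [hε]
  · rw [sum_ite_val_eq (b + 1) (fun c => (if (a : ℕ) = 0 then if c = 0 then ε else 0 else 0) * 1)]
    split_ifs <;> first | omega | contradiction | simp
  · rw [sum_ite_val_eq (b - 1)
        (fun c => if (b : ℕ) = 0 then 0 else (if (a : ℕ) = c then -ε⁻¹ else 0) * 1),
      sum_ite_val_eq b (fun c => (if c = (a : ℕ) + 1 then (1 : ℂ) else 0) * ε⁻¹)]
    split_ifs <;> first | omega | contradiction | simp
  · rw [sum_ite_val_eq (b + 1) (fun c => (if c = (a : ℕ) + 1 then (1 : ℂ) else 0) * 1)]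
    split_ifs <;> first | omega | contradiction | simp

theorem jordanChains_mul {m k : ℕ} (hmk : m + 1 ≤ k) (μ : ℂ) {ε : ℂ} (hε : ε ≠ 0) :
    jordanChains m k ε * fromBlocks (Jmat m μ) 0 0 (Jmat (k + 1) μ) =
      jordanPerturb (m + 1) k μ ε * jordanChains m k ε := by
  rw [jordanChains, jordanPerturb, fromBlocks_multiply, fromBlocks_multiply]
  congr 1 <;> ext a b <;> have ha := a.isLt <;> have hb := b.isLt <;>
    simp only [Matrix.add_apply, mul_apply, of_apply, Matrix.zero_apply, mul_zero, zero_mul,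
      Finset.sum_const_zero, zero_add, add_zero]
  · rw [mul_Jmat_apply_of_val μ b (fun c => if (a : ℕ) = c + 1 then (1 : ℂ) else 0),
      Jmat_mul_apply_of_val μ a (fun c => if c = (b : ℕ) + 1 then (1 : ℂ) else 0)]
    simp only [mul_ite, mul_zero]
    rw [sum_ite_val_eq b (fun c => (if (a : ℕ) = 0 then if c = 0 then ε else 0 else 0) * -ε⁻¹)]
    split_ifs <;> first | omega | contradiction | simp [hε]
  · rw [mul_Jmat_apply_of_val μ b
        (fun c => if (a : ℕ) = 0 then (if c = 0 then ε else 0) else 0),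
      Jmat_mul_apply_of_val μ a
        (fun c => if c = 0 then (if (b : ℕ) = 0 then ε else 0) else 0)]
    have h : ∀ c : Fin k, (if (a : ℕ) = 0 then (if (c : ℕ) = 0 then ε else 0) else 0) *
        (if (b : ℕ) = c + 1 then (1 : ℂ) else 0) =
        if (c : ℕ) = 0 then (if (a : ℕ) = 0 then (if (b : ℕ) = 1 then ε else 0) else 0) else 0 := by
      intro c
      split_ifs <;> first | omega | contradiction | simp
    rw [Finset.sum_congr rfl fun c _ => h c, sum_ite_val_eq 0
      (fun _ => if (a : ℕ) = 0 then (if (b : ℕ) = 1 then ε else 0) else 0)]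
    split_ifs <;> first | omega | contradiction | simp [mul_comm]
  · rw [mul_Jmat_apply_of_val μ b (fun c => if (a : ℕ) = c then -ε⁻¹ else 0),
      Jmat_mul_apply_of_val μ a (fun c => if c = (b : ℕ) then -ε⁻¹ else 0)]
    split_ifs <;> first | omega | contradiction | simp [mul_comm]
  · rw [mul_Jmat_apply_of_val μ b (fun c => if c = (a : ℕ) + 1 then (1 : ℂ) else 0),
      Jmat_mul_apply_of_val μ a (fun c => if (b : ℕ) = c + 1 then (1 : ℂ) else 0)]
    split_ifs <;> first | omega | contradiction | simp

theorem tendsto_skewBlocks_jordanPerturb {n j k : ℕ}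
    (e : Fin n ≃ (Fin j ⊕ Fin k) ⊕ (Fin j ⊕ Fin k)) (μ : ℂ) :
    Tendsto (fun ε => ((skewBlocks e (jordanPerturb j k μ ε), skewBlocks e 1) : Pencil n n))
      (𝓝[≠] 0)
      (𝓝 (skewBlocks e (fromBlocks (Jmat j μ) 0 0 (Jmat k μ)), skewBlocks e 1)) := by
  have h0 : fromBlocks (Jmat j μ) 0 0 (Jmat k μ) = jordanPerturb j k μ 0 := by
    rw [jordanPerturb]
    congr 1
    ext a b
    simp
  rw [h0]
  have hJ : Continuous fun ε => jordanPerturb j k μ ε := by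
    refine Continuous.matrix_fromBlocks continuous_const ?_ continuous_const continuous_const
    refine continuous_matrix fun a b => ?_
    simp only [of_apply]
    split_ifs <;> fun_prop
  have hc : Continuous fun ε =>
      ((skewBlocks e (jordanPerturb j k μ ε), skewBlocks e 1) : Pencil n n) := by
    unfold skewBlocks
    refine Continuous.prodMk (Continuous.matrix_submatrix ?_ _ _) continuous_const
    exact Continuous.matrix_fromBlocks continuous_const hJ hJ.matrix_transpose.neg continuous_const
  exact hc.continuousAt.tendsto.mono_left nhdsWithin_le_nhds

/-- **Rule 2 transition as an orbit closure inclusion**: for `1 ≤ j ≤ k` and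
`μ ∈ ℂ`, `orbᶜ (H_j(μ) ⊕ H_k(μ)) ⊆ closure (orbᶜ (H_{j-1}(μ) ⊕ H_{k+1}(μ)))`. -/
theorem orbC_H_merge_subset_closure (j k : ℕ) (μ : ℂ) (hj : 1 ≤ j) (hjk : j ≤ k) :
    Pencil.orbC (Pencil.cast (by omega) (by omega)
        (Pencil.dsum (Hblk j μ) (Hblk k μ)) :
          Pencil (2 * j + 2 * k) (2 * j + 2 * k)) ⊆
      closure (Pencil.orbC (Pencil.cast (by omega) (by omega)
        (Pencil.dsum (Hblk (j - 1) μ) (Hblk (k + 1) μ)) :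
          Pencil (2 * j + 2 * k) (2 * j + 2 * k))) := by
  obtain ⟨m, rfl⟩ := Nat.exists_eq_add_of_le' hj
  refine Pencil.orbC_subset_closure_of_mem ?_
  rw [cast_dsum_Hblk (by omega), cast_dsum_Hblk (by omega)]
  refine mem_closure_of_tendsto (tendsto_skewBlocks_jordanPerturb _ μ) ?_
  filter_upwards [self_mem_nhdsWithin] with ε hε
  exact congruent_skewBlocks _ _ (jordanChains_mul_inv (by omega) hε) (jordanChains_mul hjk μ hε)
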